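/- arXiv:2206.13146 — 2 statements merged into one kernel-verified Lean document; each statement's English description precedes it below -/
import Mathlib

section
/- Let f : ℝⁿ → [0,∞) be upper semicontinuous and log-concave with 0 < ∫_{ℝⁿ} f dx < ∞, and let L ⊂ ℝⁿ be a compact convex body. For s > 0 write F_s = {x ∈ ℝⁿ : f(x) ≥ s}. Then δ(f, 1_L) = n ∫_0^∞ W₁(F_s, L) ds, where 1_L is the indicator function of L. -/
open MeasureTheory Set Filter Topology Pointwise
open scoped ENNReal RealInnerProductSpace NNReal

noncomputable section

/-- Euclidean space ℝⁿ. -/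
abbrev Euc (n : ℕ) := EuclideanSpace ℝ (Fin n)

/-- A nonnegative function is log-concave if `f((1-λ)x+λy) ≥ f(x)^{1-λ} f(y)^λ`. -/
def LogConcaveFn {n : ℕ} (f : Euc n → ℝ) : Prop :=
  ∀ x y : Euc n, ∀ l : ℝ, 0 ≤ l → l ≤ 1 →
    f x ^ (1 - l) * f y ^ l ≤ f ((1 - l) • x + l • y)

/-- Sup-convolution `(f⋆g)(x) = sup_y f(y) g(x-y)`, valued in `[0,∞]`. -/
def supConv {n : ℕ} (f g : Euc n → ℝ) (x : Euc n) : ℝ≥0∞ :=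
  ⨆ y : Euc n, ENNReal.ofReal (f y * g (x - y))

/-- Dilation `(t·g)(x) = g(x/t)^t`. -/
def dil {n : ℕ} (t : ℝ) (g : Euc n → ℝ) (x : Euc n) : ℝ :=
  g (t⁻¹ • x) ^ t

/-- Total mass `∫ f` of a nonnegative function, in `[0,∞]`. -/
def totalMass {n : ℕ} (f : Euc n → ℝ) : ℝ≥0∞ := ∫⁻ x, ENNReal.ofReal (f x)

/-- The difference quotient `(∫ f⋆(t·g) − ∫ f)/t`, valued in `EReal`. -/
def deltaQuot {n : ℕ} (f g : Euc n → ℝ) (t : ℝ) : EReal :=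
  ((t⁻¹ : ℝ) : EReal) *
    (((∫⁻ x, supConv f (dil t g) x : ℝ≥0∞) : EReal) - ((totalMass f : ℝ≥0∞) : EReal))

/-- The support `K_f`: closure of `{x : f(x) > 0}`. -/
def spt {n : ℕ} (f : Euc n → ℝ) : Set (Euc n) := closure {x | 0 < f x}

/-- `φ = -log f`. -/
def mlog {n : ℕ} (f : Euc n → ℝ) (x : Euc n) : ℝ := -Real.log (f x)

/-- The measure `μ_f`: pushforward of `f dx` under the (a.e. defined) gradient of `φ = -log f`. -/
def muF {n : ℕ} (f : Euc n → ℝ) : Measure (Euc n) :=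
  Measure.map (gradient (mlog f)) (volume.withDensity fun x => ENNReal.ofReal (f x))

-- The outer unit normal (Gauss) map of a convex set `K`, defined (H^{n-1}-a.e. uniquely)
-- at boundary points; junk value `0` where no outer normal exists.
open Classical in
def gaussMap {n : ℕ} (K : Set (Euc n)) (x : Euc n) : Euc n :=
  if h : ∃ u : Euc n, ‖u‖ = 1 ∧ ∀ y ∈ K, ⟪y - x, u⟫ ≤ 0 then h.choose else 0

/-- The weighted boundary measure `f · H^{n-1}|_{∂K_f}`. -/
def bdryMeasure {n : ℕ} (f : Euc n → ℝ) : Measure (Euc n) :=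
  ((μH[(n : ℝ) - 1] : Measure (Euc n)).restrict (frontier (spt f))).withDensity
    (fun x => ENNReal.ofReal (f x))

/-- The measure `ν_f` on the sphere: pushforward of `f · H^{n-1}|_{∂K_f}` under the Gauss map. -/
def nuF {n : ℕ} (f : Euc n → ℝ) : Measure (Euc n) :=
  Measure.map (gaussMap (spt f)) (bdryMeasure f)

/-- Positive part of an extended real, in `[0,∞]`. -/
def epos (a : EReal) : ℝ≥0∞ := if a = ⊤ then ⊤ else ENNReal.ofReal a.toReal

/-- Integral of an `EReal`-valued function: positive part minus negative part. -/
def eInt {n : ℕ} (μ : Measure (Euc n)) (h : Euc n → EReal) : EReal :=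
  ((∫⁻ x, epos (h x) ∂μ : ℝ≥0∞) : EReal) - ((∫⁻ x, epos (-(h x)) ∂μ : ℝ≥0∞) : EReal)

/-- The support function `h_g = (-log g)^*` of a log-concave function, valued in `EReal`. -/
def hSupp {n : ℕ} (g : Euc n → ℝ) (x : Euc n) : EReal :=
  ⨆ y : Euc n, (((⟪x, y⟫ : ℝ) : EReal) +
    (if g y = 0 then (⊥ : EReal) else ((Real.log (g y) : ℝ) : EReal)))

/-- The support function of a set, valued in `EReal`. -/
def hSetE {n : ℕ} (K : Set (Euc n)) (x : Euc n) : EReal :=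
  ⨆ y ∈ K, ((⟪y, x⟫ : ℝ) : EReal)

/-- The support function of a set, real-valued: `h_K(x) = sup_{y ∈ K} ⟨y, x⟩`. -/
def hSetR {n : ℕ} (K : Set (Euc n)) (x : Euc n) : ℝ :=
  sSup ((fun y => ⟪y, x⟫) '' K)

/-- Divergence of a vector field: the trace of its derivative. -/
def dvg {n : ℕ} (Φ : Euc n → Euc n) (x : Euc n) : ℝ :=
  LinearMap.trace ℝ (Euc n) (fderiv ℝ Φ x : Euc n →ₗ[ℝ] Euc n)

/-- The anisotropic total variation `TV_L(f)`. -/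
def TVL {n : ℕ} (L : Set (Euc n)) (f : Euc n → ℝ) : EReal :=
  ⨆ Φ : {Φ : Euc n → Euc n //
      ContDiff ℝ 1 Φ ∧ HasCompactSupport Φ ∧ ∀ x, gauge L (Φ x) ≤ 1},
    ((∫ x, f x * dvg Φ.1 x : ℝ) : EReal)

/-- The anisotropic perimeter `Per_L(A) = TV_L(1_A)`. -/
def PerL {n : ℕ} (L : Set (Euc n)) (A : Set (Euc n)) : EReal :=
  TVL L (A.indicator fun _ => (1 : ℝ))

/-- The surface area measure `S_F` of a convex body: pushforward of `H^{n-1}|_{∂F}`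
under the Gauss map. -/
def surfMeasure {n : ℕ} (F : Set (Euc n)) : Measure (Euc n) :=
  Measure.map (gaussMap F) ((μH[(n : ℝ) - 1] : Measure (Euc n)).restrict (frontier F))

/-!
Since `f` is upper semicontinuous, the superlevel set `{f ⋆ 1_K ≥ s}` is `{f ≥ s} + K` for every
compact `K` and `s > 0`, so the layer-cake formula gives
`∫ f ⋆ (t · 1_L) = ∫_0^∞ |F_s + tL| ds`. If this is finite for every `t ≥ 0`, then the coefficients
of the Minkowski–Steiner polynomials, being fixed linear combinations of their values at
`t = 0, …, n`, are integrable in `s`. Hence `∫ f ⋆ (t · 1_L)` is itself a polynomial in `t`, and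
`δ(f, 1_L)` is its linear coefficient.

Finiteness comes from log-concavity: `f ≥ m > 0` on some ball, and combining this with a bound
`f ≤ M` shows that every translate `f (x - k)` with `‖k‖ ≤ R` is at most a constant times the single
integrable function `x ↦ f (a x + b)`, for some `a ≠ 0` and `b` independent of `k`.
-/

section ParametricPolynomial

variable {α 𝕜 : Type*} [MeasurableSpace α] {μ : Measure α} {m : ℕ}

lemma integrable_coeff_of_integrable_sum_mul_pow [NormedField 𝕜] {a : Fin m → α → 𝕜}
    {v : Fin m → 𝕜} (hv : Function.Injective v)
    (h : ∀ j, Integrable (fun x => ∑ k, a k x * v j ^ (k : ℕ)) μ) (k : Fin m) :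
    Integrable (a k) μ := by
  set V := Matrix.vandermonde v
  have hV : IsUnit V.det := isUnit_iff_ne_zero.2 (Matrix.det_vandermonde_ne_zero_iff.2 hv)
  have values_eq (x : α) : (fun j => ∑ k, a k x * v j ^ (k : ℕ)) = V.mulVec (a · x) := by
    funext j
    simp only [V, Matrix.mulVec, dotProduct, Matrix.vandermonde_apply, mul_comm]
  have coeff_eq (x : α) : ∑ j, V⁻¹ k j * ∑ i, a i x * v j ^ (i : ℕ) = a k x := by
    calc ∑ j, V⁻¹ k j * ∑ i, a i x * v j ^ (i : ℕ)
        = V⁻¹.mulVec (fun j => ∑ i, a i x * v j ^ (i : ℕ)) k := rfl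
      _ = a k x := by
        rw [values_eq, Matrix.mulVec_mulVec, Matrix.nonsing_inv_mul _ hV, Matrix.one_mulVec]
  exact (integrable_finsetSum _ fun j _ => (h j).const_mul _).congr (ae_of_all _ coeff_eq)

lemma integral_sum_mul_pow [RCLike 𝕜] {a : Fin m → α → 𝕜} (ha : ∀ k, Integrable (a k) μ) (t : 𝕜) :
    ∫ x, ∑ k, a k x * t ^ (k : ℕ) ∂μ = ∑ k, (∫ x, a k x ∂μ) * t ^ (k : ℕ) := by
  rw [integral_finsetSum _ fun k _ => (ha k).mul_const _]
  simp only [integral_mul_const]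

end ParametricPolynomial

-- For `n = 0` the index `1 : Fin (n + 1)` is `0`, but the factor `n` vanishes.
lemma hasDerivAt_sum_choose_mul_pow_zero {𝕜 : Type*} [NontriviallyNormedField 𝕜] (n : ℕ)
    (c : Fin (n + 1) → 𝕜) :
    HasDerivAt (fun t => ∑ k : Fin (n + 1), (n.choose k : 𝕜) * c k * t ^ (k : ℕ)) (n * c 1) 0 := by
  have hderiv : HasDerivAt (fun t => ∑ k : Fin (n + 1), (n.choose k : 𝕜) * c k * t ^ (k : ℕ))
      (∑ k : Fin (n + 1), (n.choose k : 𝕜) * c k * ((k : ℕ) * 0 ^ ((k : ℕ) - 1))) 0 :=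
    HasDerivAt.fun_sum fun k _ => (hasDerivAt_pow (k : ℕ) (0 : 𝕜)).const_mul _
  convert hderiv using 1
  cases n with
  | zero => simp
  | succ n => simp [Fin.sum_univ_succ]

lemma tendsto_deltaQuot_of_hasDerivAt {n : ℕ} {f g : Euc n → ℝ} {P : ℝ → ℝ} {P' : ℝ}
    (hf : totalMass f ≠ ⊤) (hP₀ : (totalMass f).toReal = P 0)
    (hfg : ∀ t > 0, ∫⁻ x, supConv f (dil t g) x ≠ ⊤)
    (hP : ∀ t > 0, (∫⁻ x, supConv f (dil t g) x).toReal = P t) (hderiv : HasDerivAt P P' 0) :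
    Tendsto (deltaQuot f g) (𝓝[>] 0) (𝓝 (P' : EReal)) := by
  have hslope : Tendsto (fun t => ((t⁻¹ * (P t - P 0) : ℝ) : EReal)) (𝓝[>] 0) (𝓝 (P' : EReal)) :=
    (continuous_coe_real_ereal.tendsto _).comp (by simpa using hderiv.tendsto_slope_zero_right)
  refine hslope.congr' ?_
  filter_upwards [self_mem_nhdsWithin] with t ht
  rw [deltaQuot, ← hP t ht, ← hP₀, EReal.coe_mul, EReal.coe_sub,
    EReal.coe_ennreal_toReal (hfg t ht), EReal.coe_ennreal_toReal hf]

section SupConvIndicator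

variable {n : ℕ} {f : Euc n → ℝ} {K : Set (Euc n)}

lemma dil_indicator_one {t : ℝ} (ht : 0 < t) (L : Set (Euc n)) :
    dil t (L.indicator fun _ => (1 : ℝ)) = (t • L).indicator fun _ => (1 : ℝ) := by
  funext x
  have hmem : x ∈ t • L ↔ t⁻¹ • x ∈ L := mem_smul_set_iff_inv_smul_mem₀ ht.ne' L x
  by_cases hx : t⁻¹ • x ∈ L <;> simp [dil, hmem, hx, Real.zero_rpow ht.ne']

lemma supConv_indicator_one (f : Euc n → ℝ) (K : Set (Euc n)) (x : Euc n) :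
    supConv f (K.indicator fun _ => (1 : ℝ)) x = ⨆ k ∈ K, ENNReal.ofReal (f (x - k)) := by
  rw [supConv, ← (Equiv.subLeft x).iSup_comp]
  refine iSup_congr fun k => ?_
  by_cases hk : k ∈ K <;> simp [hk]

lemma totalMass_eq_lintegral_supConv_indicator_zero (f : Euc n → ℝ) :
    totalMass f = ∫⁻ x, supConv f (({0} : Set (Euc n)).indicator fun _ => (1 : ℝ)) x := by
  simp only [totalMass, supConv_indicator_one, mem_singleton_iff, iSup_iSup_eq_left, sub_zero]

lemma exists_supConv_indicator_one_eq (hf : UpperSemicontinuous f) (hK : IsCompact K)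
    (hKne : K.Nonempty) (x : Euc n) :
    ∃ k ∈ K, supConv f (K.indicator fun _ => (1 : ℝ)) x = ENNReal.ofReal (f (x - k)) := by
  have husc : UpperSemicontinuous fun k => f (x - k) := hf.comp (by fun_prop)
  obtain ⟨k, hk, hmax⟩ := (husc.upperSemicontinuousOn K).exists_isMaxOn hKne hK
  refine ⟨k, hk, ?_⟩
  rw [supConv_indicator_one]
  exact le_antisymm (iSup₂_le fun k' hk' => ENNReal.ofReal_le_ofReal (hmax hk'))
    (le_iSup₂_of_le k hk le_rfl)

lemma supConv_indicator_one_ne_top (hf : UpperSemicontinuous f) (hK : IsCompact K)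
    (hKne : K.Nonempty) (x : Euc n) : supConv f (K.indicator fun _ => (1 : ℝ)) x ≠ ⊤ := by
  obtain ⟨k, -, hk⟩ := exists_supConv_indicator_one_eq hf hK hKne x
  exact hk ▸ ENNReal.ofReal_ne_top

lemma setOf_le_supConv_indicator_one (hf : UpperSemicontinuous f) (hK : IsCompact K)
    (hKne : K.Nonempty) {s : ℝ} (hs : 0 < s) :
    {x | s ≤ (supConv f (K.indicator fun _ => (1 : ℝ)) x).toReal} = {x | s ≤ f x} + K := by
  ext x
  rw [mem_ofPred_eq, ← ENNReal.ofReal_le_iff_le_toReal (supConv_indicator_one_ne_top hf hK hKne x)]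
  constructor
  · intro hx
    obtain ⟨k, hk, hmax⟩ := exists_supConv_indicator_one_eq hf hK hKne x
    have hsk : s ≤ f (x - k) :=
      (ENNReal.ofReal_le_ofReal_iff'.1 (hmax ▸ hx)).resolve_right hs.not_ge
    exact ⟨x - k, hsk, k, hk, sub_add_cancel x k⟩
  · rintro ⟨y, hy, k, hk, rfl⟩
    rw [supConv_indicator_one]
    refine le_iSup₂_of_le k hk (ENNReal.ofReal_le_ofReal ?_)
    simpa using hy

lemma measurable_toReal_supConv_indicator_one (hf : UpperSemicontinuous f) (hK : IsCompact K)
    (hKne : K.Nonempty) :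
    Measurable fun x => (supConv f (K.indicator fun _ => (1 : ℝ)) x).toReal := by
  refine measurable_of_Ici fun s => ?_
  rcases le_or_gt s 0 with hs | hs
  · convert MeasurableSet.univ
    exact eq_univ_of_forall fun x => hs.trans ENNReal.toReal_nonneg
  · change MeasurableSet {x | s ≤ (supConv f (K.indicator fun _ => (1 : ℝ)) x).toReal}
    rw [setOf_le_supConv_indicator_one hf hK hKne hs]
    exact ((hf.isClosed_preimage s).add_right_of_isCompact hK).measurableSet

lemma lintegral_supConv_indicator_one (hf : UpperSemicontinuous f) (hK : IsCompact K)
    (hKne : K.Nonempty) :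
    ∫⁻ x, supConv f (K.indicator fun _ => (1 : ℝ)) x =
      ∫⁻ s in Ioi (0 : ℝ), volume ({x | s ≤ f x} + K) := by
  calc ∫⁻ x, supConv f (K.indicator fun _ => (1 : ℝ)) x
      = ∫⁻ x, ENNReal.ofReal (supConv f (K.indicator fun _ => (1 : ℝ)) x).toReal :=
        lintegral_congr fun x =>
          (ENNReal.ofReal_toReal (supConv_indicator_one_ne_top hf hK hKne x)).symm
    _ = ∫⁻ s in Ioi (0 : ℝ),
          volume {x | s ≤ (supConv f (K.indicator fun _ => (1 : ℝ)) x).toReal} :=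
        lintegral_eq_lintegral_meas_le volume (ae_of_all _ fun _ => ENNReal.toReal_nonneg)
          (measurable_toReal_supConv_indicator_one hf hK hKne).aemeasurable
    _ = ∫⁻ s in Ioi (0 : ℝ), volume ({x | s ≤ f x} + K) :=
        setLIntegral_congr_fun measurableSet_Ioi fun _ hs =>
          congrArg volume (setOf_le_supConv_indicator_one hf hK hKne hs)

lemma measurable_volume_superlevel_add (f : Euc n → ℝ) (K : Set (Euc n)) :
    Measurable fun s : ℝ => volume ({x | s ≤ f x} + K) :=
  Antitone.measurable fun _ _ hss' =>
    measure_mono (add_subset_add_right fun _ hx => hss'.trans hx)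

lemma integrableOn_volume_superlevel_add (hf : UpperSemicontinuous f) (hK : IsCompact K)
    (hKne : K.Nonempty) (hfin : ∫⁻ x, supConv f (K.indicator fun _ => (1 : ℝ)) x ≠ ⊤) :
    IntegrableOn (fun s : ℝ => (volume ({x | s ≤ f x} + K)).toReal) (Ioi 0) :=
  integrable_toReal_of_lintegral_ne_top (measurable_volume_superlevel_add f K).aemeasurable
    (lintegral_supConv_indicator_one hf hK hKne ▸ hfin)

lemma toReal_lintegral_supConv_indicator_one (hf : UpperSemicontinuous f) (hK : IsCompact K)
    (hKne : K.Nonempty) (hfin : ∫⁻ x, supConv f (K.indicator fun _ => (1 : ℝ)) x ≠ ⊤) :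
    (∫⁻ x, supConv f (K.indicator fun _ => (1 : ℝ)) x).toReal =
      ∫ s in Ioi (0 : ℝ), (volume ({x | s ≤ f x} + K)).toReal := by
  rw [lintegral_supConv_indicator_one hf hK hKne] at hfin ⊢
  have hmeas := measurable_volume_superlevel_add f K
  exact (integral_toReal hmeas.aemeasurable (ae_lt_top hmeas hfin)).symm

end SupConvIndicator

section Steiner

variable {n : ℕ} {f : Euc n → ℝ} {L : Set (Euc n)} {W : ℝ → Fin (n + 1) → ℝ}

lemma toReal_lintegral_supConv_indicator_smul (hf : UpperSemicontinuous f) (hL : IsCompact L)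
    (hLne : L.Nonempty)
    (hfin : ∀ t : ℝ, 0 ≤ t → ∫⁻ x, supConv f ((t • L).indicator fun _ => (1 : ℝ)) x ≠ ⊤)
    (hW : ∀ s : ℝ, 0 < s → ∀ t : ℝ, 0 ≤ t →
      (volume ({x | s ≤ f x} + t • L)).toReal
        = ∑ k : Fin (n + 1), (n.choose (k : ℕ) : ℝ) * W s k * t ^ (k : ℕ))
    {t : ℝ} (ht : 0 ≤ t) :
    (∫⁻ x, supConv f ((t • L).indicator fun _ => (1 : ℝ)) x).toReal =
      ∑ k : Fin (n + 1), (n.choose k : ℝ) * (∫ s in Ioi (0 : ℝ), W s k) * t ^ (k : ℕ) := by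
  have hsteiner {t : ℝ} (ht : 0 ≤ t) : EqOn (fun s => (volume ({x | s ≤ f x} + t • L)).toReal)
      (fun s => ∑ k : Fin (n + 1), (n.choose k : ℝ) * W s k * t ^ (k : ℕ)) (Ioi 0) :=
    fun s hs => hW s hs t ht
  have hcoeff (k : Fin (n + 1)) : IntegrableOn (fun s => (n.choose k : ℝ) * W s k) (Ioi 0) := by
    refine integrable_coeff_of_integrable_sum_mul_pow
      (a := fun k s => (n.choose (k : Fin (n + 1)) : ℝ) * W s k)
      (v := fun j => ((j : ℕ) : ℝ)) (Nat.cast_injective.comp Fin.val_injective) (fun j => ?_) k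
    have hj : (0 : ℝ) ≤ (j : ℕ) := Nat.cast_nonneg _
    exact (integrableOn_volume_superlevel_add hf (hL.smul _) hLne.smul_set (hfin _ hj)).congr_fun
      (hsteiner hj) measurableSet_Ioi
  rw [toReal_lintegral_supConv_indicator_one hf (hL.smul t) hLne.smul_set (hfin t ht),
    setIntegral_congr_fun measurableSet_Ioi (hsteiner ht), integral_sum_mul_pow hcoeff]
  simp only [integral_const_mul]

lemma tendsto_deltaQuot_indicator_of_lintegral_supConv_ne_top (hf : UpperSemicontinuous f)
    (hL : IsCompact L) (hLne : L.Nonempty)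
    (hfin : ∀ t : ℝ, 0 ≤ t → ∫⁻ x, supConv f ((t • L).indicator fun _ => (1 : ℝ)) x ≠ ⊤)
    (hW : ∀ s : ℝ, 0 < s → ∀ t : ℝ, 0 ≤ t →
      (volume ({x | s ≤ f x} + t • L)).toReal
        = ∑ k : Fin (n + 1), (n.choose (k : ℕ) : ℝ) * W s k * t ^ (k : ℕ)) :
    Tendsto (deltaQuot f (L.indicator fun _ => (1 : ℝ))) (𝓝[>] (0 : ℝ))
      (𝓝 ((((n : ℝ) * ∫ s in Set.Ioi (0 : ℝ), W s 1) : ℝ) : EReal)) := by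
  have hmass : totalMass f = ∫⁻ x, supConv f (((0 : ℝ) • L).indicator fun _ => (1 : ℝ)) x := by
    rw [zero_smul_set hLne, totalMass_eq_lintegral_supConv_indicator_zero]
    rfl
  have hpoly {t : ℝ} (ht : 0 ≤ t) := toReal_lintegral_supConv_indicator_smul hf hL hLne hfin hW ht
  refine tendsto_deltaQuot_of_hasDerivAt (hmass ▸ hfin 0 le_rfl) (hmass ▸ hpoly le_rfl)
    (fun t ht => ?_) (fun t ht => ?_)
    (hasDerivAt_sum_choose_mul_pow_zero n fun k => ∫ s in Ioi (0 : ℝ), W s k)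
  · exact dil_indicator_one ht L ▸ hfin t ht.le
  · exact dil_indicator_one ht L ▸ hpoly ht.le

end Steiner

lemma measure_eq_zero_of_convex_of_interior_eq_empty {E : Type*} [NormedAddCommGroup E]
    [NormedSpace ℝ E] [MeasurableSpace E] [BorelSpace E] [FiniteDimensional ℝ E] {μ : Measure E}
    [μ.IsAddHaarMeasure] {C : Set E} (hC : Convex ℝ C) (hint : interior C = ∅) : μ C = 0 := by
  refine measure_mono_null ?_ (hC.addHaar_frontier μ)
  rw [frontier, hint, sdiff_empty]
  exact subset_closure

namespace LogConcaveFn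

variable {n : ℕ} {f : Euc n → ℝ}

lemma convex_superlevel (hf : LogConcaveFn f) {s : ℝ} (hs : 0 < s) :
    Convex ℝ {x | s ≤ f x} := by
  intro x hx y hy a b ha hb hab
  obtain rfl : a = 1 - b := eq_sub_of_add_eq hab
  have hfx : 0 ≤ f x := hs.le.trans hx
  calc s = s ^ (1 - b) * s ^ b := by rw [← Real.rpow_add hs, hab, Real.rpow_one]
    _ ≤ f x ^ (1 - b) * f y ^ b := by gcongr <;> assumption
    _ ≤ f ((1 - b) • x + b • y) := hf x y b hb (sub_nonneg.1 ha)

lemma exists_closedBall_subset_superlevel (hf : LogConcaveFn f) (hpos : 0 < totalMass f) :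
    ∃ m > 0, ∃ x₀, ∃ r > 0, Metric.closedBall x₀ r ⊆ {x | m ≤ f x} := by
  suffices ∃ m > 0, (interior {x | m ≤ f x}).Nonempty by
    obtain ⟨m, hm, x₀, hx₀⟩ := this
    exact ⟨m, hm, x₀, Metric.nhds_basis_closedBall.mem_iff.1 (mem_interior_iff_mem_nhds.1 hx₀)⟩
  by_contra! hempty
  have hnull (k : ℕ) : volume {x | 1 / ((k : ℝ) + 1) ≤ f x} = 0 :=
    measure_eq_zero_of_convex_of_interior_eq_empty
      (hf.convex_superlevel Nat.one_div_pos_of_nat) (hempty _ Nat.one_div_pos_of_nat)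
  have hsupport : {x | 0 < f x} ⊆ ⋃ k : ℕ, {x | 1 / ((k : ℝ) + 1) ≤ f x} := by
    intro x hx
    obtain ⟨k, hk⟩ := exists_nat_one_div_lt (mem_ofPred.1 hx)
    exact mem_iUnion.2 ⟨k, hk.le⟩
  have hae : ∀ᵐ x, ENNReal.ofReal (f x) = 0 := by
    simpa only [ae_iff, ENNReal.ofReal_eq_zero, not_le] using
      measure_mono_null hsupport (measure_iUnion_null hnull)
  exact hpos.ne' (lintegral_eq_zero_of_ae_eq_zero hae)

section Ball

variable {m r : ℝ} {x₀ : Euc n}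

-- `z` lies in the convex combination `(1 - l) y + l B(x₀, r)`.
lemma rpow_mul_rpow_le (hf : LogConcaveFn f) (hf0 : ∀ x, 0 ≤ f x) (hm : 0 ≤ m)
    (hball : Metric.closedBall x₀ r ⊆ {x | m ≤ f x}) {l : ℝ} (hl₀ : 0 < l) (hl₁ : l ≤ 1)
    {y z : Euc n} (hz : ‖z - ((1 - l) • y + l • x₀)‖ ≤ l * r) :
    f y ^ (1 - l) * m ^ l ≤ f z := by
  set w := x₀ + l⁻¹ • (z - ((1 - l) • y + l • x₀))
  have hw : w ∈ Metric.closedBall x₀ r := by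
    rw [mem_closedBall_iff_norm, add_sub_cancel_left, norm_smul, norm_inv,
      Real.norm_of_nonneg hl₀.le]
    exact (inv_mul_le_iff₀ hl₀).2 hz
  have hzw : (1 - l) • y + l • w = z := by
    rw [smul_add, smul_inv_smul₀ hl₀.ne']
    module
  have hmw : m ≤ f w := hball hw
  have hfy : 0 ≤ f y := hf0 y
  calc f y ^ (1 - l) * m ^ l ≤ f y ^ (1 - l) * f w ^ l := by gcongr
    _ ≤ f z := hzw ▸ hf y w l hl₀.le hl₁

lemma sqrt_mul_sqrt_mul_volume_le_totalMass (hf : LogConcaveFn f) (hf0 : ∀ x, 0 ≤ f x)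
    (hm : 0 ≤ m) (hball : Metric.closedBall x₀ r ⊆ {x | m ≤ f x}) (y : Euc n) :
    ENNReal.ofReal (√(f y) * √m) * volume (Metric.closedBall (0 : Euc n) (r / 2)) ≤
      totalMass f := by
  set c := (1 - 1 / 2 : ℝ) • y + (1 / 2 : ℝ) • x₀
  have hle : ∀ z ∈ Metric.closedBall c (r / 2), √(f y) * √m ≤ f z := by
    intro z hz
    have hz' : ‖z - c‖ ≤ 1 / 2 * r := by
      rw [mem_closedBall_iff_norm] at hz
      linarith
    have := hf.rpow_mul_rpow_le hf0 hm hball (by norm_num) (by norm_num) hz'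
    rwa [sub_half, ← Real.sqrt_eq_rpow, ← Real.sqrt_eq_rpow] at this
  calc ENNReal.ofReal (√(f y) * √m) * volume (Metric.closedBall (0 : Euc n) (r / 2))
      = ∫⁻ _ in Metric.closedBall c (r / 2), ENNReal.ofReal (√(f y) * √m) := by
        rw [setLIntegral_const, Measure.addHaar_closedBall_center volume c]
    _ ≤ ∫⁻ z in Metric.closedBall c (r / 2), ENNReal.ofReal (f z) :=
        setLIntegral_mono' measurableSet_closedBall fun z hz =>
          ENNReal.ofReal_le_ofReal (hle z hz)
    _ ≤ totalMass f := setLIntegral_le_lintegral _ _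

lemma exists_forall_le (hf : LogConcaveFn f) (hf0 : ∀ x, 0 ≤ f x) (hfin : totalMass f < ⊤)
    (hm : 0 < m) (hr : 0 < r) (hball : Metric.closedBall x₀ r ⊆ {x | m ≤ f x}) :
    ∃ M, ∀ x, f x ≤ M := by
  set v := (volume (Metric.closedBall (0 : Euc n) (r / 2))).toReal
  have hv : 0 < v := ENNReal.toReal_pos (Metric.measure_closedBall_pos _ _ (half_pos hr)).ne'
    measure_closedBall_lt_top.ne
  have hmv : 0 < √m * v := mul_pos (Real.sqrt_pos.2 hm) hv
  refine ⟨((totalMass f).toReal / (√m * v)) ^ 2, fun y => ?_⟩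
  have hle : √(f y) * √m * v ≤ (totalMass f).toReal := by
    have := ENNReal.toReal_mono hfin.ne (hf.sqrt_mul_sqrt_mul_volume_le_totalMass hf0 hm.le hball y)
    rwa [ENNReal.toReal_mul, ENNReal.toReal_ofReal (by positivity)] at this
  refine (Real.sqrt_le_left (by positivity)).1 ?_
  rwa [le_div_iff₀ hmv, ← mul_assoc]

lemma le_div_rpow_mul (hf : LogConcaveFn f) (hf0 : ∀ x, 0 ≤ f x) (hm : 0 < m)
    (hball : Metric.closedBall x₀ r ⊆ {x | m ≤ f x}) {M : ℝ} (hM : ∀ x, f x ≤ M)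
    {l : ℝ} (hl₀ : 0 < l) (hl₁ : l ≤ 1) {y z : Euc n}
    (hz : ‖z - ((1 - l) • y + l • x₀)‖ ≤ l * r) :
    f y ≤ (M / m) ^ l * f z := by
  have hfy : 0 ≤ f y := hf0 y
  have hM₀ : 0 ≤ M := hfy.trans (hM y)
  calc f y = f y ^ l * f y ^ (1 - l) := by
        rw [← Real.rpow_add_of_nonneg hfy hl₀.le (sub_nonneg.2 hl₁), add_sub_cancel,
          Real.rpow_one]
    _ ≤ M ^ l * f y ^ (1 - l) := by gcongr; exact hM y
    _ = (M / m) ^ l * (f y ^ (1 - l) * m ^ l) := by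
        rw [Real.div_rpow hM₀ hm.le]
        field_simp
    _ ≤ (M / m) ^ l * f z := by
        gcongr
        exact hf.rpow_mul_rpow_le hf0 hm.le hball hl₀ hl₁ hz

end Ball

lemma exists_forall_translate_le (hf : LogConcaveFn f) (hf0 : ∀ x, 0 ≤ f x)
    (hpos : 0 < totalMass f) (hfin : totalMass f < ⊤) {R : ℝ} (hR : 0 < R) :
    ∃ C a : ℝ, a ≠ 0 ∧ ∃ b, ∀ x k : Euc n, ‖k‖ ≤ R → f (x - k) ≤ C * f (a • x + b) := by
  obtain ⟨m, hm, x₀, r, hr, hball⟩ := hf.exists_closedBall_subset_superlevel hpos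
  obtain ⟨M, hM⟩ := hf.exists_forall_le hf0 hfin hm hr hball
  -- `l` balances the two radii: `(1 - l) R = l r`.
  set l := R / (R + r)
  have hl : 1 - l = r / (R + r) := by simp only [l]; field_simp; ring
  have hl₀ : 0 < l := by positivity
  have hl₁ : 0 < 1 - l := by rw [hl]; positivity
  have hbalance : (1 - l) * R = l * r := by rw [hl]; simp only [l]; ring
  refine ⟨(M / m) ^ l, 1 - l, hl₁.ne', l • x₀, fun x k hk => ?_⟩
  refine hf.le_div_rpow_mul hf0 hm hball hM hl₀ (sub_nonneg.1 hl₁.le) ?_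
  calc ‖(1 - l) • x + l • x₀ - ((1 - l) • (x - k) + l • x₀)‖ = ‖(1 - l) • k‖ := by
        congr 1; module
    _ = (1 - l) * ‖k‖ := by rw [norm_smul, Real.norm_of_nonneg hl₁.le]
    _ ≤ (1 - l) * R := by gcongr
    _ = l * r := hbalance

lemma lintegral_supConv_indicator_one_ne_top (hf : LogConcaveFn f) (hf0 : ∀ x, 0 ≤ f x)
    (hmeas : Measurable f) (hpos : 0 < totalMass f) (hfin : totalMass f < ⊤) {K : Set (Euc n)}
    (hK : Bornology.IsBounded K) : ∫⁻ x, supConv f (K.indicator fun _ => (1 : ℝ)) x ≠ ⊤ := by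
  obtain ⟨R, hR, hKR⟩ := hK.exists_pos_norm_le
  obtain ⟨C, a, ha, b, hle⟩ := hf.exists_forall_translate_le hf0 hpos hfin hR
  have hint : Integrable f :=
    ⟨hmeas.aestronglyMeasurable, (hasFiniteIntegral_iff_ofReal (ae_of_all _ hf0)).2 hfin⟩
  have hint' : Integrable fun x => C * f (a • x + b) :=
    ((hint.comp_add_right b).comp_smul ha).const_mul C
  refine ((lintegral_mono fun x => ?_).trans_lt hint'.lintegral_lt_top).ne
  rw [supConv_indicator_one]
  exact iSup₂_le fun k hk => ENNReal.ofReal_le_ofReal (hle x k (hKR k hk))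

end LogConcaveFn

theorem delta_indicator_quermassintegral_general (n : ℕ) (f : Euc n → ℝ)
    (hf0 : ∀ x, 0 ≤ f x) (hfusc : UpperSemicontinuous f) (hflc : LogConcaveFn f)
    (hfpos : 0 < totalMass f) (hffin : totalMass f < ⊤)
    (L : Set (Euc n)) (hLcomp : IsCompact L) (hLne : L.Nonempty)
    (W : ℝ → Fin (n + 1) → ℝ)
    (hW : ∀ s : ℝ, 0 < s → ∀ t : ℝ, 0 ≤ t →
      (volume ({x | s ≤ f x} + t • L)).toReal
        = ∑ k : Fin (n + 1), (n.choose (k : ℕ) : ℝ) * W s k * t ^ (k : ℕ)) :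
    Tendsto (deltaQuot f (L.indicator fun _ => (1 : ℝ))) (𝓝[>] (0 : ℝ))
      (𝓝 ((((n : ℝ) * ∫ s in Set.Ioi (0 : ℝ), W s 1) : ℝ) : EReal)) :=
  tendsto_deltaQuot_indicator_of_lintegral_supConv_ne_top hfusc hLcomp hLne
    (fun t _ => hflc.lintegral_supConv_indicator_one_ne_top hf0 hfusc.measurable hfpos hffin
      (hLcomp.smul t).isBounded) hW

/-- `δ(f, 1_L) = n ∫_0^∞ W₁(F_s, L) ds`, where the relative
quermassintegrals `W_k(F_s, L)` are the coefficients of the Minkowski–Steiner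
polynomial `|F_s + tL| = Σ_k (n choose k) W_k(F_s,L) t^k`. -/
theorem delta_indicator_quermassintegral (n : ℕ) (f : Euc n → ℝ)
    (hf0 : ∀ x, 0 ≤ f x) (hfusc : UpperSemicontinuous f) (hflc : LogConcaveFn f)
    (hfpos : 0 < totalMass f) (hffin : totalMass f < ⊤)
    (L : Set (Euc n)) (hLcomp : IsCompact L) (hLconv : Convex ℝ L)
    (hLint : (interior L).Nonempty)
    (W : ℝ → Fin (n + 1) → ℝ)
    (hW : ∀ s : ℝ, 0 < s → ∀ t : ℝ, 0 ≤ t →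
      (volume ({x | s ≤ f x} + t • L)).toReal
        = ∑ k : Fin (n + 1), (n.choose (k : ℕ) : ℝ) * W s k * t ^ (k : ℕ)) :
    Tendsto (deltaQuot f (L.indicator fun _ => (1 : ℝ))) (𝓝[>] (0 : ℝ))
      (𝓝 ((((n : ℝ) * ∫ s in Set.Ioi (0 : ℝ), W s 1) : ℝ) : EReal)) := by
  exact delta_indicator_quermassintegral_general n f hf0 hfusc hflc hfpos hffin L hLcomp
    (hLint.mono interior_subset) W hW

end
end

section
/- Let f, g : ℝⁿ → [0,∞) be upper semicontinuous log-concave functions such that 0 < ∫_{ℝⁿ} f dx < ∞ and g is compactly supported (and not identically 0). Then for Lebesgue-almost every x ∈ ℝⁿ, lim_{t→0⁺} ((f⋆(t·g))(x) − f(x))/t = h_g(∇φ(x)) f(x), where φ = −log f and the right-hand side is interpreted as 0 whenever f(x) = 0. -/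
open MeasureTheory Set Filter Topology Pointwise
open scoped ENNReal RealInnerProductSpace NNReal

noncomputable section

/-!
Substituting `y = x - t z`, the sup-convolution `(f ⋆ (t·g))(x)` is the supremum of
`f (x - t z) * g z ^ t` over the `z` with `g z ≠ 0`, a bounded set. If `f` is positive near `x` and
`φ = -log f` is differentiable at `x`, then, uniformly over these `z`,
`f (x - t z) * g z ^ t = f x * exp (t * (⟪∇φ x, z⟫ + log (g z) + o(1)))`. Taking the supremum over
`z` gives `f x * exp (t * (h_g (∇φ x) + o(1)))`, whose right derivative at `t = 0` is
`h_g (∇φ x) * f x`. If `f` vanishes near `x`, then so does the sup-convolution at `x` for small `t`.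
Almost every `x` is of one of these two kinds: `{f > 0}` is convex, so its frontier is null, and the
convex function `φ` is locally Lipschitz on its interior, so Rademacher's theorem applies.
-/

section DifferenceQuotients

theorem tendsto_mul_exp_sub_div (c a : ℝ) :
    Tendsto (fun t : ℝ => (c * Real.exp (t * a) - c) / t) (𝓝[>] 0) (𝓝 (a * c)) := by
  have hderiv : HasDerivAt (fun t : ℝ => c * Real.exp (t * a)) (a * c) 0 := by
    simpa [mul_comm] using ((hasDerivAt_mul_const (x := (0 : ℝ)) a).exp).const_mul c
  simpa [div_eq_inv_mul] using hderiv.tendsto_slope_zero_right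

theorem tendsto_sub_div_of_eventually_mem_Icc_mul_exp {S : ℝ → ℝ} {c a : ℝ}
    (hS : ∀ ε > 0, ∀ᶠ t in 𝓝[>] 0,
      S t ∈ Icc (c * Real.exp (t * (a - ε))) (c * Real.exp (t * (a + ε)))) :
    Tendsto (fun t => (S t - c) / t) (𝓝[>] 0) (𝓝 (a * c)) := by
  refine tendsto_order.2 ⟨fun l hl => ?_, fun u hu => ?_⟩
  · have hcont : Tendsto (fun ε : ℝ => (a - ε) * c) (𝓝[>] 0) (𝓝 (a * c)) :=
      Continuous.tendsto' (by fun_prop) _ _ (by simp) |>.mono_left nhdsWithin_le_nhds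
    obtain ⟨ε, hlε, hε⟩ := ((hcont.eventually_const_lt hl).and self_mem_nhdsWithin).exists
    filter_upwards [(tendsto_mul_exp_sub_div c (a - ε)).eventually_const_lt hlε, hS ε hε,
      self_mem_nhdsWithin] with t hlt hSt (ht : 0 < t)
    exact hlt.trans_le (by gcongr; exact hSt.1)
  · have hcont : Tendsto (fun ε : ℝ => (a + ε) * c) (𝓝[>] 0) (𝓝 (a * c)) :=
      Continuous.tendsto' (by fun_prop) _ _ (by simp) |>.mono_left nhdsWithin_le_nhds
    obtain ⟨ε, hεu, hε⟩ := ((hcont.eventually_lt_const hu).and self_mem_nhdsWithin).exists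
    filter_upwards [(tendsto_mul_exp_sub_div c (a + ε)).eventually_lt_const hεu, hS ε hε,
      self_mem_nhdsWithin] with t htu hSt (ht : 0 < t)
    exact lt_of_le_of_lt (by gcongr; exact hSt.2) htu

end DifferenceQuotients

section UniformExpansion

theorem eventually_forall_sub_smul_mem {E : Type*} [NormedAddCommGroup E] [NormedSpace ℝ E]
    {B U : Set E} {x : E} (hB : Bornology.IsBounded B) (hU : U ∈ 𝓝 x) :
    ∀ᶠ t : ℝ in 𝓝 0, ∀ z ∈ B, x - t • z ∈ U := by
  have hV : (fun w => x - w) ⁻¹' U ∈ 𝓝 (0 : E) :=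
    (continuous_const.sub continuous_id).continuousAt.preimage_mem_nhds (by simpa using hU)
  exact (NormedSpace.isVonNBounded_of_isBounded ℝ hB hV).eventually_nhds_zero (mem_of_mem_nhds hV)

theorem eventually_forall_abs_sub_add_mul_inner_le {E : Type*} [NormedAddCommGroup E]
    [InnerProductSpace ℝ E] [CompleteSpace E] {φ : E → ℝ} {v x : E} {B : Set E}
    (hφ : HasGradientAt φ v x) (hB : Bornology.IsBounded B) {ε : ℝ} (hε : 0 < ε) :
    ∀ᶠ t : ℝ in 𝓝 0, ∀ z ∈ B, |φ (x - t • z) - φ x + t * ⟪v, z⟫| ≤ |t| * ε := by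
  obtain ⟨R, hR, hBR⟩ := hB.exists_pos_norm_le
  filter_upwards [eventually_forall_sub_smul_mem hB
    ((hasGradientAt_iff_isLittleO.1 hφ).def (div_pos hε hR))] with t ht z hz
  have hbound := ht z hz
  simp only [sub_sub_cancel_left, inner_neg_right, inner_smul_right, norm_neg, norm_smul,
    sub_neg_eq_add, Real.norm_eq_abs] at hbound
  calc |φ (x - t • z) - φ x + t * ⟪v, z⟫| ≤ ε / R * (|t| * ‖z‖) := hbound
    _ ≤ ε / R * (|t| * R) := by gcongr; exact hBR z hz
    _ = |t| * ε := by field_simp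

end UniformExpansion

section AlmostEverywhereDifferentiability

variable {E : Type*} [NormedAddCommGroup E] [NormedSpace ℝ E] [FiniteDimensional ℝ E]
  [MeasurableSpace E] [BorelSpace E] (μ : Measure E) [μ.IsAddHaarMeasure]

theorem ae_differentiableAt_of_mem_of_locallyLipschitzOn {F : Type*} [NormedAddCommGroup F]
    [NormedSpace ℝ F] [FiniteDimensional ℝ F] {φ : E → F} {U : Set E}
    (hφ : LocallyLipschitzOn U φ) (hU : IsOpen U) :
    ∀ᵐ x ∂μ, x ∈ U → DifferentiableAt ℝ φ x := by
  refine measure_null_of_locally_null _ fun x hx => ?_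
  obtain ⟨hxU, -⟩ := Classical.not_imp.1 hx
  obtain ⟨K, V, hV, hLip⟩ := hφ hxU
  have hVx : V ∈ 𝓝 x := hU.nhdsWithin_eq hxU ▸ hV
  have hae := (hLip.mono interior_subset).ae_differentiableWithinAt_of_mem (μ := μ)
  refine ⟨_ ∩ interior V, inter_mem_nhdsWithin _ (interior_mem_nhds.2 hVx),
    measure_mono_null ?_ hae⟩
  rintro y ⟨hy, hyV⟩ hdiff
  exact hy fun _ => (hdiff hyV).differentiableAt (isOpen_interior.mem_nhds hyV)

theorem ae_differentiableAt_of_mem_interior_of_convexOn {φ : E → ℝ} {s : Set E}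
    (hφ : ConvexOn ℝ s φ) : ∀ᵐ x ∂μ, x ∈ interior s → DifferentiableAt ℝ φ x :=
  ae_differentiableAt_of_mem_of_locallyLipschitzOn μ hφ.locallyLipschitzOn_interior isOpen_interior

end AlmostEverywhereDifferentiability

theorem bddAbove_range_of_upperSemicontinuous_of_hasCompactSupport {α β : Type*}
    [TopologicalSpace α] [LinearOrder β] [Zero β] {g : α → β} (hg : UpperSemicontinuous g)
    (hgc : HasCompactSupport g) :
    BddAbove (range g) := by
  obtain ⟨M, hM⟩ := (hg.upperSemicontinuousOn (tsupport g)).bddAbove_of_isCompact hgc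
  refine ⟨max M 0, forall_mem_range.2 fun z => ?_⟩
  by_cases hz : z ∈ tsupport g
  · exact (hM (mem_image_of_mem g hz)).trans (le_max_left _ _)
  · exact (image_eq_zero_of_notMem_tsupport hz).trans_le (le_max_right _ _)

section FirstVariation

variable {n : ℕ} {f g : Euc n → ℝ} {x v : Euc n}

namespace LogConcaveFn

theorem convex_pos (hf : LogConcaveFn f) : Convex ℝ {x | 0 < f x} := by
  rintro x (hx : 0 < f x) y (hy : 0 < f y) a b ha hb hab
  obtain rfl : a = 1 - b := by linarith
  exact lt_of_lt_of_le (by positivity) (hf x y b hb (by linarith))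

theorem convexOn_mlog (hf : LogConcaveFn f) : ConvexOn ℝ {x | 0 < f x} (mlog f) := by
  refine ⟨hf.convex_pos, ?_⟩
  rintro x (hx : 0 < f x) y (hy : 0 < f y) a b ha hb hab
  obtain rfl : a = 1 - b := by linarith
  have hlog := Real.log_le_log (by positivity) (hf x y b hb (by linarith))
  rw [Real.log_mul (by positivity) (by positivity), Real.log_rpow hx, Real.log_rpow hy] at hlog
  simp only [mlog, smul_eq_mul]
  linarith

end LogConcaveFn

section SupportFunction

/-- The set of values `⟪v, z⟫ - (-log g) z` at the points where `-log g` is finite; its least upper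
bound is the support function `h_g` at `v`. The points with `g z = 0` are left out because
`Real.log 0 = 0`, whereas they contribute `⊥` to `hSupp`. -/
def hSuppValues (g : Euc n → ℝ) (v : Euc n) : Set ℝ :=
  (fun z => ⟪v, z⟫ + Real.log (g z)) '' Function.support g

theorem hSupp_eq_sSup_coe_image (g : Euc n → ℝ) (v : Euc n) :
    hSupp g v = sSup (Real.toEReal '' hSuppValues g v) := by
  rw [sSup_image, hSuppValues, iSup_image, hSupp]
  refine iSup_congr fun z => ?_
  by_cases hz : g z = 0 <;> simp [hz]

theorem hSupp_eq_coe_sSup (hne : (hSuppValues g v).Nonempty)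
    (hbdd : BddAbove (hSuppValues g v)) : hSupp g v = ↑(sSup (hSuppValues g v)) :=
  (hSupp_eq_sSup_coe_image g v).trans (EReal.coe_strictMono.monotone.map_csSup_of_continuousAt
    continuous_coe_real_ereal.continuousAt hne hbdd).symm

theorem isLUB_toReal_hSupp (hne : (hSuppValues g v).Nonempty)
    (hbdd : BddAbove (hSuppValues g v)) : IsLUB (hSuppValues g v) (hSupp g v).toReal := by
  rw [hSupp_eq_coe_sSup hne hbdd, EReal.toReal_coe]
  exact isLUB_csSup hne hbdd

theorem bddAbove_hSuppValues (hg0 : ∀ z, 0 ≤ g z) (hgb : BddAbove (range g))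
    (hgs : Bornology.IsBounded (Function.support g)) (v : Euc n) :
    BddAbove (hSuppValues g v) := by
  obtain ⟨R, hR⟩ := hgs.exists_norm_le
  obtain ⟨M, hM⟩ := hgb
  refine ⟨‖v‖ * R + Real.log M, forall_mem_image.2 fun z hz => ?_⟩
  have hgz : 0 < g z := (hg0 z).lt_of_ne' hz
  have hinner : ⟪v, z⟫ ≤ ‖v‖ * R := (real_inner_le_norm v z).trans (by gcongr; exact hR z hz)
  exact add_le_add hinner (Real.log_le_log hgz (hM (mem_range_self z)))

end SupportFunction

section SupConvolution

theorem supConv_dil_eq_iSup_support (f g : Euc n → ℝ) (x : Euc n) {t : ℝ} (ht : t ≠ 0) :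
    supConv f (dil t g) x =
      ⨆ z ∈ Function.support g, ENNReal.ofReal (f (x - t • z) * g z ^ t) := by
  have hsurj : Function.Surjective fun z : Euc n => x - t • z := fun y =>
    ⟨t⁻¹ • (x - y), by simp [smul_inv_smul₀ ht]⟩
  rw [supConv, ← hsurj.iSup_comp]
  refine iSup_congr fun z => ?_
  by_cases hz : g z = 0 <;> simp [dil, inv_smul_smul₀ ht, hz, Real.zero_rpow ht]

theorem eventually_supConv_dil_eq_zero (hf : f =ᶠ[𝓝 x] 0)
    (hgs : Bornology.IsBounded (Function.support g)) :
    ∀ᶠ t in 𝓝[≠] 0, supConv f (dil t g) x = 0 := by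
  filter_upwards [nhdsWithin_le_nhds (eventually_forall_sub_smul_mem hgs hf),
    self_mem_nhdsWithin] with t hft (ht : t ≠ 0)
  rw [supConv_dil_eq_iSup_support f g x ht]
  refine le_antisymm (iSup₂_le fun z hz => ?_) zero_le
  have hfz : f (x - t • z) = 0 := hft z hz
  simp [hfz]

theorem eventually_forall_mul_rpow_mem_Icc (hfx : ∀ᶠ y in 𝓝 x, 0 < f y)
    (hgrad : HasGradientAt (mlog f) v x) (hg0 : ∀ z, 0 ≤ g z)
    (hgs : Bornology.IsBounded (Function.support g)) {ε : ℝ} (hε : 0 < ε) :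
    ∀ᶠ t in 𝓝[>] 0, ∀ z ∈ Function.support g,
      f (x - t • z) * g z ^ t ∈
        Icc (f x * Real.exp (t * (⟪v, z⟫ + Real.log (g z) - ε)))
          (f x * Real.exp (t * (⟪v, z⟫ + Real.log (g z) + ε))) := by
  filter_upwards [nhdsWithin_le_nhds (eventually_forall_sub_smul_mem hgs hfx),
    nhdsWithin_le_nhds (eventually_forall_abs_sub_add_mul_inner_le hgrad hgs hε),
    self_mem_nhdsWithin] with t hpos hexpand (ht : 0 < t) z hz
  have hgz : 0 < g z := (hg0 z).lt_of_ne' hz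
  have hfz : 0 < f (x - t • z) := hpos z hz
  have hremainder := abs_le.1 (hexpand z hz)
  rw [abs_of_pos ht] at hremainder
  simp only [mlog] at hremainder
  have hproduct : f (x - t • z) * g z ^ t =
      Real.exp (Real.log (f (x - t • z)) + t * Real.log (g z)) := by
    rw [Real.exp_add, Real.exp_log hfz, Real.rpow_def_of_pos hgz, mul_comm t]
  have hscaled (a : ℝ) : f x * Real.exp a = Real.exp (Real.log (f x) + a) := by
    rw [Real.exp_add, Real.exp_log hfx.self_of_nhds]
  rw [hproduct, hscaled, hscaled, mem_Icc, Real.exp_le_exp, Real.exp_le_exp]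
  constructor <;> linarith

theorem eventually_toReal_supConv_dil_mem_Icc {H : ℝ} (hfx : ∀ᶠ y in 𝓝 x, 0 < f y)
    (hgrad : HasGradientAt (mlog f) v x) (hg0 : ∀ z, 0 ≤ g z)
    (hgs : Bornology.IsBounded (Function.support g)) (hH : IsLUB (hSuppValues g v) H)
    {ε : ℝ} (hε : 0 < ε) :
    ∀ᶠ t in 𝓝[>] 0, (supConv f (dil t g) x).toReal ∈
      Icc (f x * Real.exp (t * (H - ε))) (f x * Real.exp (t * (H + ε))) := by
  have hfx0 : 0 < f x := hfx.self_of_nhds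
  obtain ⟨_, ⟨w, hw, rfl⟩, hHw, -⟩ := hH.exists_between_sub_self (half_pos hε)
  replace hHw : H - ε / 2 < ⟪v, w⟫ + Real.log (g w) := hHw
  filter_upwards [eventually_forall_mul_rpow_mem_Icc hfx hgrad hg0 hgs (half_pos hε),
    self_mem_nhdsWithin] with t hterm (ht : 0 < t)
  have hupper : supConv f (dil t g) x ≤ ENNReal.ofReal (f x * Real.exp (t * (H + ε))) := by
    rw [supConv_dil_eq_iSup_support f g x ht.ne']
    refine iSup₂_le fun z hz => ENNReal.ofReal_le_ofReal ((hterm z hz).2.trans ?_)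
    have hzH : ⟪v, z⟫ + Real.log (g z) ≤ H := hH.1 (mem_image_of_mem _ hz)
    gcongr
    linarith
  have hlower : ENNReal.ofReal (f (x - t • w) * g w ^ t) ≤ supConv f (dil t g) x := by
    rw [supConv_dil_eq_iSup_support f g x ht.ne']
    exact le_iSup₂_of_le w hw le_rfl
  refine ⟨?_, ENNReal.toReal_le_of_le_ofReal (by positivity) hupper⟩
  calc f x * Real.exp (t * (H - ε))
      ≤ f x * Real.exp (t * (⟪v, w⟫ + Real.log (g w) - ε / 2)) := by
        gcongr f x * Real.exp (t * ?_)
        linarith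
    _ ≤ f (x - t • w) * g w ^ t := (hterm w hw).1
    _ ≤ (supConv f (dil t g) x).toReal :=
      (ENNReal.ofReal_le_iff_le_toReal (hupper.trans_lt ENNReal.ofReal_lt_top).ne).1 hlower

theorem tendsto_supConv_dil_sub_div_of_eventuallyEq_zero (hf : f =ᶠ[𝓝 x] 0)
    (hgs : Bornology.IsBounded (Function.support g)) :
    Tendsto (fun t : ℝ => ((supConv f (dil t g) x).toReal - f x) / t) (𝓝[>] 0) (𝓝 0) := by
  refine tendsto_const_nhds.congr' ?_
  filter_upwards [nhdsGT_le_nhdsNE 0 (eventually_supConv_dil_eq_zero hf hgs)] with t ht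
  simp [ht, hf.self_of_nhds]

theorem tendsto_supConv_dil_sub_div_of_hasGradientAt (hfx : ∀ᶠ y in 𝓝 x, 0 < f y)
    (hgrad : HasGradientAt (mlog f) v x) (hg0 : ∀ z, 0 ≤ g z) (hgb : BddAbove (range g))
    (hgs : Bornology.IsBounded (Function.support g)) (hgne : ∃ z, g z ≠ 0) :
    Tendsto (fun t : ℝ => ((supConv f (dil t g) x).toReal - f x) / t)
      (𝓝[>] 0) (𝓝 ((hSupp g v).toReal * f x)) := by
  have hlub : IsLUB (hSuppValues g v) (hSupp g v).toReal :=
    isLUB_toReal_hSupp (Set.Nonempty.image _ hgne) (bddAbove_hSuppValues hg0 hgb hgs v)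
  exact tendsto_sub_div_of_eventually_mem_Icc_mul_exp fun ε hε =>
    eventually_toReal_supConv_dil_mem_Icc hfx hgrad hg0 hgs hlub hε

end SupConvolution

theorem pointwise_first_variation_general (hf0 : ∀ x, 0 ≤ f x) (hflc : LogConcaveFn f)
    (hg0 : ∀ x, 0 ≤ g x) (hgb : BddAbove (range g))
    (hgs : Bornology.IsBounded (Function.support g)) (hgne : ∃ x, g x ≠ 0) :
    ∀ᵐ x : Euc n,
      Tendsto (fun t : ℝ => ((supConv f (dil t g) x).toReal - f x) / t)
        (𝓝[>] 0) (𝓝 ((hSupp g (gradient (mlog f) x)).toReal * f x)) := by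
  have hfrontier : ∀ᵐ x : Euc n, x ∉ frontier {x | 0 < f x} :=
    measure_eq_zero_iff_ae_notMem.1 (hflc.convex_pos.addHaar_frontier volume)
  filter_upwards [hfrontier, ae_differentiableAt_of_mem_interior_of_convexOn volume
    hflc.convexOn_mlog] with x hx hdiff
  by_cases hint : x ∈ interior {x | 0 < f x}
  · exact tendsto_supConv_dil_sub_div_of_hasGradientAt (mem_interior_iff_mem_nhds.1 hint)
      (hdiff hint).hasGradientAt hg0 hgb hgs hgne
  · have hclosure : x ∉ closure {x | 0 < f x} := fun hcl => hx ⟨hcl, hint⟩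
    have hzero : f =ᶠ[𝓝 x] 0 := by
      filter_upwards [isClosed_closure.isOpen_compl.mem_nhds hclosure] with y hy
      exact le_antisymm (not_lt.1 fun hpos => hy (subset_closure hpos)) (hf0 y)
    simpa [hzero.self_of_nhds] using tendsto_supConv_dil_sub_div_of_eventuallyEq_zero hzero hgs

end FirstVariation

/-- For `g` compactly supported (not identically 0), for a.e. `x`,
`lim_{t→0⁺} ((f⋆(t·g))(x) − f(x))/t = h_g(∇φ(x)) f(x)` with `φ = −log f`,
the right-hand side interpreted as `0` whenever `f(x) = 0`. -/
theorem pointwise_first_variation (n : ℕ) (f g : Euc n → ℝ)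
    (hf0 : ∀ x, 0 ≤ f x) (hfusc : UpperSemicontinuous f) (hflc : LogConcaveFn f)
    (hfpos : 0 < totalMass f) (hffin : totalMass f < ⊤)
    (hg0 : ∀ x, 0 ≤ g x) (hgusc : UpperSemicontinuous g) (hglc : LogConcaveFn g)
    (hgc : HasCompactSupport g) (hgne : ∃ x, g x ≠ 0) :
    ∀ᵐ x : Euc n ∂(volume : Measure (Euc n)),
      Tendsto (fun t : ℝ => ((supConv f (dil t g) x).toReal - f x) / t)
        (𝓝[>] (0 : ℝ)) (𝓝 ((hSupp g (gradient (mlog f) x)).toReal * f x)) := by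
  exact pointwise_first_variation_general hf0 hflc hg0
    (bddAbove_range_of_upperSemicontinuous_of_hasCompactSupport hgusc hgc)
    (hgc.isBounded.subset (subset_tsupport g)) hgne

end
end
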